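/- arXiv:2105.03924 — 8 statements merged into one kernel-verified Lean document; each statement's English description precedes it below -/
import Mathlib

section
/- Let I be a finite set of trains and N a finite set of nodes with capacity function c : N → ℕ, and let a, b : I → N be placements that are both safe. Then there exists an enumeration of the trains, i.e., a bijection σ : Fin |I| → I, such that for every step k < |I|, writing S_k = {σ m : m < k} and x_{S_k} for the intermediate placement of a, b and S_k, the following holds: for every node n, the number of trains j with j ≠ σ k and x_{S_k} j = n is strictly less than c n. (That is, the trains can be moved one at a time from their a-positions to their b-positions in the order σ, and at the moment each train moves, every node of the network has a free slot when the moving train itself is not counted.) -/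
/-- A placement `x : I → N` is *safe* if every node has a strictly free slot. -/
def SafePlacement {I N : Type*} [Fintype I] [DecidableEq N]
    (c : N → ℕ) (x : I → N) : Prop :=
  ∀ n : N, (Finset.univ.filter (fun i : I => x i = n)).card < c n

/-- Train `i` may move when the trains in `S` have already moved. -/
def StepOK {I N : Type*} [Fintype I] [DecidableEq I] [DecidableEq N]
    (c : N → ℕ) (a b : I → N) (S : Finset I) (i : I) : Prop :=
  ∀ n : N, (Finset.univ.filter (fun j : I =>
    j ≠ i ∧ (if j ∈ S then b j else a j) = n)).card < c n

theorem stepOK_next {I N : Type*} [Fintype I] [DecidableEq I] [DecidableEq N]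
    (c : N → ℕ) (a b : I → N) (hb : SafePlacement c b) (S : Finset I) (i : I)
    (h : StepOK c a b S i) (hne : insert i S ≠ Finset.univ) :
    ∃ j, j ∉ insert i S ∧ StepOK c a b (insert i S) j := by
  have hoff : ∀ n, n ≠ b i → (Finset.univ.filter (fun j : I =>
      (if j ∈ insert i S then b j else a j) = n)).card < c n := by
    intro n hn
    refine lt_of_le_of_lt (Finset.card_le_card ?_) (h n)
    intro j hj
    simp only [Finset.mem_filter, Finset.mem_univ, true_and, Finset.mem_insert] at hj ⊢
    by_cases hji : j = i
    · subst hji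
      simp at hj
      exact absurd hj.symm hn
    · simp [hji] at hj
      exact ⟨hji, hj⟩
  have hon : (Finset.univ.filter (fun j : I =>
      (if j ∈ insert i S then b j else a j) = b i)).card ≤ c (b i) := by
    have h1 : (Finset.univ.filter (fun j : I =>
      (if j ∈ insert i S then b j else a j) = b i)) ⊆ insert i (Finset.univ.filter (fun j : I =>
        j ≠ i ∧ (if j ∈ S then b j else a j) = b i)) := by
      intro j hj
      simp only [Finset.mem_filter, Finset.mem_univ, true_and, Finset.mem_insert] at hj ⊢
      by_cases hji : j = i
      · exact Or.inl hji
      · simp [hji] at hj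
        exact Or.inr ⟨hji, hj⟩
    exact (Finset.card_le_card h1).trans ((Finset.card_insert_le _ _).trans (h (b i)))
  have hsub : ∀ (k : I) (n : N), (Finset.univ.filter (fun j : I =>
      j ≠ k ∧ (if j ∈ insert i S then b j else a j) = n)) ⊆ Finset.univ.filter (fun j : I =>
      (if j ∈ insert i S then b j else a j) = n) := by
    intro k n j hj
    simp only [Finset.mem_filter, Finset.mem_univ, true_and] at hj ⊢
    exact hj.2
  rcases hon.lt_or_eq with hlt | heq
  · obtain ⟨j, hj⟩ : ∃ j, j ∉ insert i S := by
      by_contra! hall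
      exact hne (Finset.eq_univ_of_forall hall)
    refine ⟨j, hj, fun n => lt_of_le_of_lt (Finset.card_le_card (hsub j n)) ?_⟩
    by_cases hn : n = b i
    · rw [hn]; exact hlt
    · exact hoff n hn
  · obtain ⟨k, hk, hbk⟩ : ∃ k, (if k ∈ insert i S then b k else a k) = b i ∧ b k ≠ b i := by
      by_contra! hall
      have := Finset.card_le_card (s := Finset.univ.filter (fun j : I =>
        (if j ∈ insert i S then b j else a j) = b i))
        (t := Finset.univ.filter (fun j : I => b j = b i)) (by
          intro j hj
          simp only [Finset.mem_filter, Finset.mem_univ, true_and] at hj ⊢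
          exact hall j hj)
      have h2 := hb (b i)
      omega
    have hkS : k ∉ insert i S := by
      intro hm
      rw [if_pos hm] at hk
      exact hbk hk
    refine ⟨k, hkS, fun n => ?_⟩
    by_cases hn : n = b i
    · subst hn
      rw [← heq]
      refine Finset.card_lt_card (Finset.ssubset_iff_of_subset (hsub k _) |>.2 ⟨k, ?_, ?_⟩)
      · simp only [Finset.mem_filter, Finset.mem_univ, true_and]
        exact hk
      · simp
    · exact lt_of_le_of_lt (Finset.card_le_card (hsub k n)) (hoff n hn)

/-- trains can be moved one at a time from their `a`-positions to
their `b`-positions in some order `σ`, such that at the moment each train moves,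
every node has a free slot when the moving train itself is not counted. -/
theorem safe_to_safe_enumeration
    {I N : Type*} [Fintype I] [DecidableEq I] [Fintype N] [DecidableEq N]
    (c : N → ℕ) (a b : I → N)
    (ha : SafePlacement c a) (hb : SafePlacement c b) :
    ∃ σ : Fin (Fintype.card I) ≃ I,
      ∀ k : Fin (Fintype.card I), ∀ n : N,
        (Finset.univ.filter (fun j : I =>
            j ≠ σ k ∧
            (if ∃ m : Fin (Fintype.card I), m < k ∧ σ m = j then b j else a j) = n)).card
          < c n := by
  rcases isEmpty_or_nonempty I with hI | hI
  · exact ⟨(Fintype.equivFin I).symm, fun k => (hI.false ((Fintype.equivFin I).symm k)).elim⟩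
  have hex : ∀ S : Finset I, ∃ i, (∃ j, j ∉ S ∧ StepOK c a b S j) →
      i ∉ S ∧ StepOK c a b S i := by
    intro S
    by_cases hS : ∃ j, j ∉ S ∧ StepOK c a b S j
    · obtain ⟨j, hj⟩ := hS
      exact ⟨j, fun _ => hj⟩
    · exact ⟨Classical.arbitrary I, fun h => (hS h).elim⟩
  choose g hg using hex
  let T : ℕ → Finset I := fun k => Nat.rec ∅ (fun _ S => insert (g S) S) k
  have hT0 : T 0 = ∅ := rfl
  have hTs : ∀ k, T (k + 1) = insert (g (T k)) (T k) := fun _ => rfl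
  have hmem : ∀ k j, j ∈ T k ↔ ∃ m, m < k ∧ g (T m) = j := by
    intro k j
    induction k with
    | zero => simp [hT0]
    | succ k ih =>
      rw [hTs, Finset.mem_insert, ih]
      constructor
      · rintro (h | ⟨m, hm, h⟩)
        · exact ⟨k, by omega, h.symm⟩
        · exact ⟨m, by omega, h⟩
      · rintro ⟨m, hm, h⟩
        rcases Nat.lt_succ_iff_lt_or_eq.1 hm with h1 | h1
        · exact Or.inr ⟨m, h1, h⟩
        · subst h1; exact Or.inl h.symm
  have hcard : ∀ k, (T k).card ≤ k := by
    intro k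
    induction k with
    | zero => simp [hT0]
    | succ k ih =>
      rw [hTs]
      exact (Finset.card_insert_le _ _).trans (by omega)
  have hinv : ∀ k, k < Fintype.card I → ∃ j, j ∉ T k ∧ StepOK c a b (T k) j := by
    intro k
    induction k with
    | zero =>
      intro _
      refine ⟨Classical.arbitrary I, by simp [hT0], fun n => ?_⟩
      refine lt_of_le_of_lt (Finset.card_le_card ?_) (ha n)
      intro j hj
      simp only [hT0, Finset.mem_filter, Finset.mem_univ, true_and] at hj ⊢
      simpa using hj.2
    | succ k ih =>
      intro hk
      have h1 := hg (T k) (ih (by omega))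
      rw [hTs]
      refine stepOK_next c a b hb (T k) _ h1.2 ?_
      intro hu
      have h2 := hcard (k + 1)
      rw [hTs, hu, Finset.card_univ] at h2
      omega
  have hinj : Function.Injective (fun k : Fin (Fintype.card I) => g (T k)) := by
    have key : ∀ m k : Fin (Fintype.card I), m < k → g (T m) ≠ g (T k) := by
      intro m k hmk he
      exact (hg (T k) (hinv k k.2)).1 ((hmem k _).2 ⟨m, hmk, he⟩)
    intro m k he
    rcases lt_trichotomy m k with h | h | h
    · exact (key m k h he).elim
    · exact h
    · exact (key k m h he.symm).elim
  have hbij := (Fintype.bijective_iff_injective_and_card _).2 ⟨hinj, by simp⟩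
  refine ⟨Equiv.ofBijective _ hbij, fun k n => ?_⟩
  refine lt_of_le_of_lt (Finset.card_le_card ?_) ((hg (T k) (hinv k k.2)).2 n)
  intro j hj
  simp only [Finset.mem_filter, Finset.mem_univ, true_and, Equiv.ofBijective_apply] at hj ⊢
  refine ⟨hj.1, ?_⟩
  rw [← hj.2]
  have hiff : j ∈ T k ↔ ∃ m : Fin (Fintype.card I), m < k ∧ g (T m) = j := by
    rw [hmem]
    constructor
    · rintro ⟨m, hm, h⟩
      exact ⟨⟨m, hm.trans k.2⟩, hm, h⟩
    · rintro ⟨m, hm, h⟩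
      exact ⟨m, hm, h⟩
  simp only [hiff]
end

section
/- Let I be a finite set of trains and N a finite set of nodes with capacity function c : N → ℕ, and let a, b : I → N be placements that are both safe. Then there exists a bijection σ : Fin |I| → I such that for every k with 0 ≤ k ≤ |I|, writing S_k = {σ m : m < k} and x_{S_k} for the intermediate placement of a, b and S_k, the capacity constraints are respected at every intermediate state: for every node n, the number of trains j with x_{S_k} j = n is at most c n. -/
/-- Number of trains at `n` after the trains of `S` have moved. -/
def nodeLoad {I N : Type*} [Fintype I] [DecidableEq I] [DecidableEq N]
    (a b : I → N) (S : Finset I) (n : N) : ℕ :=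
  (Finset.univ.filter (fun j : I => (if j ∈ S then b j else a j) = n)).card

theorem nodeLoad_insert {I N : Type*} [Fintype I] [DecidableEq I] [DecidableEq N]
    (a b : I → N) (S : Finset I) (i : I) (hi : i ∉ S) (n : N) :
    nodeLoad a b (insert i S) n + (if a i = n then 1 else 0)
      = nodeLoad a b S n + (if b i = n then 1 else 0) := by
  unfold nodeLoad
  rw [Finset.card_filter, Finset.card_filter,
    ← Finset.add_sum_erase _ _ (Finset.mem_univ i),
    ← Finset.add_sum_erase _ _ (Finset.mem_univ i)]
  have h : ∑ j ∈ Finset.univ.erase i, (if (if j ∈ insert i S then b j else a j) = n then 1 else 0)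
      = ∑ j ∈ Finset.univ.erase i, (if (if j ∈ S then b j else a j) = n then 1 else 0) := by
    apply Finset.sum_congr rfl
    intro j hj
    have : j ≠ i := Finset.ne_of_mem_erase hj
    simp [this]
  rw [h]
  simp only [Finset.mem_insert_self, if_true, hi, if_false]
  omega

/-- Capacities are respected and at most one node is full. -/
def AlmostSafe {I N : Type*} [Fintype I] [DecidableEq I] [DecidableEq N]
    (c : N → ℕ) (a b : I → N) (S : Finset I) : Prop :=
  (∀ n, nodeLoad a b S n ≤ c n) ∧
    ∀ n m, nodeLoad a b S n = c n → nodeLoad a b S m = c m → n = m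

theorem almostSafe_step {I N : Type*} [Fintype I] [DecidableEq I] [DecidableEq N]
    (c : N → ℕ) (a b : I → N) (hb : SafePlacement c b) (S : Finset I)
    (hS : AlmostSafe c a b S) (hne : ∃ i, i ∉ S) :
    ∃ i, i ∉ S ∧ AlmostSafe c a b (insert i S) := by
  -- it suffices that every full node is the origin of `i`
  have key : ∃ i, i ∉ S ∧ ∀ n, nodeLoad a b S n = c n → a i = n := by
    by_cases hv : ∃ v, nodeLoad a b S v = c v
    · obtain ⟨v, hv⟩ := hv
      have hlt := hb v
      rw [← hv] at hlt
      obtain ⟨i, hi, hi'⟩ := Finset.exists_mem_notMem_of_card_lt_card hlt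
      simp only [Finset.mem_filter, Finset.mem_univ, true_and] at hi hi'
      have hiS : i ∉ S := by
        intro h
        rw [if_pos h] at hi
        exact hi' hi
      rw [if_neg hiS] at hi
      exact ⟨i, hiS, fun n hn => hi.trans (hS.2 v n hv hn)⟩
    · obtain ⟨i, hi⟩ := hne
      exact ⟨i, hi, fun n hn => (hv ⟨n, hn⟩).elim⟩
  obtain ⟨i, hi, hfull⟩ := key
  refine ⟨i, hi, ?_⟩
  have main : ∀ n, nodeLoad a b (insert i S) n ≤ c n ∧
      (nodeLoad a b (insert i S) n = c n → b i = n) := by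
    intro n
    have h1 := nodeLoad_insert a b S i hi n
    have h2 := hS.1 n
    have h3 := hfull n
    by_cases hA : a i = n <;> by_cases hB : b i = n <;>
      simp only [hA, hB, if_true, if_false] at h1 h3 ⊢ <;> grind
  exact ⟨fun n => (main n).1, fun n m hn hm => ((main n).2 hn).symm.trans ((main m).2 hm)⟩

theorem almostSafe_list {I N : Type*} [Fintype I] [DecidableEq I] [DecidableEq N]
    (c : N → ℕ) (a b : I → N) (hb : SafePlacement c b) :
    ∀ (d : ℕ) (S : Finset I), Sᶜ.card = d → AlmostSafe c a b S →
      ∃ l : List I, l.Nodup ∧ (∀ i, i ∈ l ↔ i ∉ S) ∧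
        ∀ k, AlmostSafe c a b (S ∪ (l.take k).toFinset) := by
  intro d
  induction d with
  | zero =>
    intro S hd hS
    refine ⟨[], List.nodup_nil, ?_, by simpa using hS⟩
    intro i
    rw [Finset.card_eq_zero] at hd
    have : i ∉ Sᶜ := by simp [hd]
    simpa using this
  | succ d ih =>
    intro S hd hS
    have hne : ∃ i, i ∉ S := by
      obtain ⟨i, hi⟩ := Finset.card_pos.mp (by omega : 0 < Sᶜ.card)
      exact ⟨i, by simpa using hi⟩
    obtain ⟨i, hi, hS'⟩ := almostSafe_step c a b hb S hS hne
    have hc : (insert i S)ᶜ.card = d := by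
      rw [Finset.compl_insert, Finset.card_erase_of_mem (by simpa using hi)]
      omega
    obtain ⟨l, hl, hm, hk⟩ := ih _ hc hS'
    refine ⟨i :: l, ?_, ?_, ?_⟩
    · rw [List.nodup_cons]
      exact ⟨by simp [hm], hl⟩
    · intro j
      rw [List.mem_cons, hm, Finset.mem_insert]
      grind
    · intro k
      cases k with
      | zero => simpa using hS
      | succ k =>
        have := hk k
        rw [List.take_succ_cons, List.toFinset_cons, Finset.union_insert, ← Finset.insert_union]
        exact this

/-- there is an order `σ` in which trains can be moved from their
`a`-positions to their `b`-positions such that at every intermediate state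
(after the first `k` trains have moved) the capacity constraints hold at every
node. -/
theorem safe_to_safe_capacity_respected
    {I N : Type*} [Fintype I] [DecidableEq I] [Fintype N] [DecidableEq N]
    (c : N → ℕ) (a b : I → N)
    (ha : SafePlacement c a) (hb : SafePlacement c b) :
    ∃ σ : Fin (Fintype.card I) ≃ I,
      ∀ k : ℕ, k ≤ Fintype.card I →
        ∀ n : N,
          (Finset.univ.filter (fun j : I =>
              (if ∃ m : Fin (Fintype.card I), (m : ℕ) < k ∧ σ m = j then b j else a j) = n)).card
            ≤ c n := by
  have h0 : AlmostSafe c a b ∅ := by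
    have h : ∀ n, nodeLoad a b ∅ n < c n := by
      intro n
      simpa [nodeLoad] using ha n
    exact ⟨fun n => (h n).le, fun n m hn => absurd hn (h n).ne⟩
  obtain ⟨l, hl, hm, hk⟩ := almostSafe_list c a b hb _ ∅ rfl h0
  have hm' : ∀ i, i ∈ l := fun i => by simp [hm]
  let e : Fin l.length ≃ I := hl.getEquivOfForallMemList l hm'
  have hlen : Fintype.card I = l.length := by
    rw [← Fintype.card_congr e, Fintype.card_fin]
  refine ⟨(finCongr hlen).trans e, ?_⟩
  intro k _ n
  have hiff : ∀ j : I, (∃ m : Fin (Fintype.card I), (m : ℕ) < k ∧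
      ((finCongr hlen).trans e) m = j) ↔ j ∈ (∅ ∪ (l.take k).toFinset : Finset I) := by
    intro j
    rw [Finset.empty_union, List.mem_toFinset, List.mem_take_iff_getElem]
    constructor
    · rintro ⟨m, hmk, rfl⟩
      exact ⟨m, by have := m.2; omega, rfl⟩
    · rintro ⟨m, hmk, rfl⟩
      exact ⟨⟨m, by omega⟩, by simp; omega, rfl⟩
  have := (hk k).1 n
  simp only [hiff]
  exact this
end

section
/- Let I be a finite set of trains and N a finite set of nodes with capacity function c : N → ℕ. Let a, b : I → N be placements and let m be a node such that the number of trains j with b j = m is strictly less than c m. Let S ⊆ I and let x_S be the intermediate placement of a, b and S. If the number of trains j with x_S j = m is at least c m, then there exists a train j ∉ S with a j = m (in particular x_S j = m); that is, whenever a node is filled to capacity at an intermediate state, it hosts a train that has not yet been moved. -/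
/-- if a node `m` is filled to capacity at an intermediate
placement (trains in `S` are at their `b`-positions, the others at their
`a`-positions), and `m` has a free slot in the terminal placement `b`, then
node `m` hosts a train that has not yet been moved. -/
theorem full_node_hosts_unmoved_train
    {I N : Type*} [Fintype I] [DecidableEq I] [Fintype N] [DecidableEq N]
    (c : N → ℕ) (a b : I → N) (m : N)
    (hbm : (Finset.univ.filter (fun j : I => b j = m)).card < c m)
    (S : Finset I)
    (hfull : c m ≤ (Finset.univ.filter (fun j : I =>
        (if j ∈ S then b j else a j) = m)).card) :
    ∃ j : I, j ∉ S ∧ a j = m ∧ (if j ∈ S then b j else a j) = m := by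
  by_contra hne
  refine absurd (lt_of_lt_of_le hbm hfull) (not_lt.mpr (Finset.card_le_card ?_))
  intro j hj
  have hjm := (Finset.mem_filter.mp hj).2
  refine Finset.mem_filter.mpr ⟨Finset.mem_univ j, ?_⟩
  by_cases hS : j ∈ S
  · rwa [if_pos hS] at hjm
  · exact absurd ⟨j, hS, by rwa [if_neg hS] at hjm, hjm⟩ hne
end

section
/- In the path-constrained railway transition system, let k₁ and k₂ be configurations that are both safe, and suppose k₂ is non-regressive with respect to k₁, i.e., k₁ i ≤ k₂ i for every train i. Then k₂ is reachable from k₁. (There always exists a sequence of train movements, each respecting the free-slot condition, that drives the system from any safe state into any other safe state that is non-regressive with respect to it.) -/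
/-- A *single move*: one train `i` advances one step along its path, the
destination node having a free slot not counting train `i`. -/
def Move {I N : Type*} [Fintype I] [DecidableEq I] [DecidableEq N]
    (c : N → ℕ) (L : I → ℕ) (p : ∀ i : I, Fin (L i + 1) → N)
    (k k' : ∀ i : I, Fin (L i + 1)) : Prop :=
  ∃ (i : I) (h : (k i : ℕ) < L i),
    k' i = ⟨(k i : ℕ) + 1, Nat.succ_lt_succ h⟩ ∧
    (∀ j : I, j ≠ i → k' j = k j) ∧
    (Finset.univ.filter (fun j : I =>
        j ≠ i ∧ p j (k j) = p i ⟨(k i : ℕ) + 1, Nat.succ_lt_succ h⟩)).card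
      < c (p i ⟨(k i : ℕ) + 1, Nat.succ_lt_succ h⟩)

/-- Reachability: reflexive–transitive closure of the single-move relation. -/
def Reachable {I N : Type*} [Fintype I] [DecidableEq I] [DecidableEq N]
    (c : N → ℕ) (L : I → ℕ) (p : ∀ i : I, Fin (L i + 1) → N)
    (k k' : ∀ i : I, Fin (L i + 1)) : Prop :=
  Relation.ReflTransGen (Move c L p) k k'

/-- A configuration is *safe* if every node has a strictly free slot. -/
def SafeConfig {I N : Type*} [Fintype I] [DecidableEq I] [DecidableEq N]
    (c : N → ℕ) (L : I → ℕ) (p : ∀ i : I, Fin (L i + 1) → N)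
    (k : ∀ i : I, Fin (L i + 1)) : Prop :=
  ∀ n : N, (Finset.univ.filter (fun i : I => p i (k i) = n)).card < c n

/-- If no node other than possibly `m` is full, and `m` is at most full, then `k₂` is reachable. -/
theorem reach_aux
    {I N : Type*} [Fintype I] [DecidableEq I] [DecidableEq N]
    (c : N → ℕ) (L : I → ℕ) (p : ∀ i : I, Fin (L i + 1) → N)
    (k₂ : ∀ i : I, Fin (L i + 1)) (h₂ : SafeConfig c L p k₂) (D : ℕ) :
    ∀ (k : ∀ i : I, Fin (L i + 1)) (m : N),
      (∀ n, n ≠ m → (Finset.univ.filter (fun i : I => p i (k i) = n)).card < c n) →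
      (Finset.univ.filter (fun i : I => p i (k i) = m)).card ≤ c m →
      (∀ i : I, (k i : ℕ) ≤ (k₂ i : ℕ)) →
      (∑ i, ((k₂ i : ℕ) - (k i : ℕ)) = D) →
      Relation.ReflTransGen (Move c L p) k k₂ := by
  induction D with
  | zero =>
    intro k m _ _ hle hD
    have : k = k₂ := by
      funext i
      have := (Finset.sum_eq_zero_iff.mp hD) i (Finset.mem_univ i)
      have := hle i
      apply Fin.ext
      omega
    rw [this]
  | succ D ih =>
    intro k m hlt hm hle hD
    have hex : ∃ i, (k i : ℕ) < k₂ i ∧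
        ((Finset.univ.filter (fun i : I => p i (k i) = m)).card = c m → p i (k i) = m) := by
      by_cases hfull : (Finset.univ.filter (fun i : I => p i (k i) = m)).card = c m
      · by_contra! hcon
        have hsub : (Finset.univ.filter (fun i : I => p i (k i) = m)) ⊆
            (Finset.univ.filter (fun i : I => p i (k₂ i) = m)) := by
          intro i hi
          simp only [Finset.mem_filter, Finset.mem_univ, true_and] at hi ⊢
          have h1 : ¬ (k i : ℕ) < k₂ i := fun h => (hcon i h).2 hi
          have h3 := hle i
          have : k₂ i = k i := Fin.ext (by omega)
          rw [this, hi]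
        have := Finset.card_le_card hsub
        have := h₂ m
        omega
      · by_contra! hcon
        have : ∑ i, ((k₂ i : ℕ) - (k i : ℕ)) = 0 := by
          apply Finset.sum_eq_zero
          intro i _
          by_contra hne
          exact hfull (hcon i (by omega)).1
        omega
    obtain ⟨i, hi, him⟩ := hex
    have hL : (k i : ℕ) < L i := by have := (k₂ i).isLt; omega
    have key : ∀ n, (Finset.univ.filter (fun j : I => j ≠ i ∧ p j (k j) = n)).card < c n := by
      intro n
      have hsub : (Finset.univ.filter (fun j : I => j ≠ i ∧ p j (k j) = n)) ⊆
          (Finset.univ.filter (fun j : I => p j (k j) = n)) := by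
        intro j hj
        simp only [Finset.mem_filter, Finset.mem_univ, true_and] at hj ⊢
        exact hj.2
      by_cases hn : n = m
      · subst hn
        by_cases hfull : (Finset.univ.filter (fun i : I => p i (k i) = n)).card = c n
        · rw [← hfull]
          apply Finset.card_lt_card
          refine ⟨hsub, fun h => ?_⟩
          have := @h i (by simp [him hfull])
          simp at this
        · have := Finset.card_le_card hsub
          omega
      · exact lt_of_le_of_lt (Finset.card_le_card hsub) (hlt n hn)
    let d : Fin (L i + 1) := ⟨(k i : ℕ) + 1, Nat.succ_lt_succ hL⟩
    let k' := Function.update k i d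
    have hki : k' i = d := Function.update_self ..
    have hkj : ∀ j, j ≠ i → k' j = k j := fun j hj => Function.update_of_ne hj ..
    refine Relation.ReflTransGen.head (b := k') ⟨i, hL, hki, hkj, key _⟩ ?_
    refine ih k' (p i d) ?_ ?_ ?_ ?_
    · intro n hn
      refine lt_of_le_of_lt (Finset.card_le_card ?_) (key n)
      intro j hj
      simp only [Finset.mem_filter, Finset.mem_univ, true_and] at hj ⊢
      by_cases hji : j = i
      · subst hji
        rw [hki] at hj
        exact absurd hj.symm hn
      · rw [hkj j hji] at hj
        exact ⟨hji, hj⟩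
    · refine le_trans (Finset.card_le_card (t := insert i
        (Finset.univ.filter (fun j : I => j ≠ i ∧ p j (k j) = p i d))) ?_) ?_
      · intro j hj
        simp only [Finset.mem_filter, Finset.mem_univ, true_and, Finset.mem_insert] at hj ⊢
        by_cases hji : j = i
        · exact Or.inl hji
        · rw [hkj j hji] at hj
          exact Or.inr ⟨hji, hj⟩
      · exact le_trans (Finset.card_insert_le _ _) (key _)
    · intro j
      by_cases hji : j = i
      · subst hji
        rw [hki]
        exact hi
      · rw [hkj j hji]
        exact hle j
    · have e1 := Finset.add_sum_erase Finset.univ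
        (fun i => (k₂ i : ℕ) - (k i : ℕ)) (Finset.mem_univ i)
      have e2 := Finset.add_sum_erase Finset.univ
        (fun i => (k₂ i : ℕ) - (k' i : ℕ)) (Finset.mem_univ i)
      have e3 : ∑ j ∈ Finset.univ.erase i, ((k₂ j : ℕ) - (k' j : ℕ)) =
          ∑ j ∈ Finset.univ.erase i, ((k₂ j : ℕ) - (k j : ℕ)) := by
        apply Finset.sum_congr rfl
        intro j hj
        rw [hkj j (Finset.ne_of_mem_erase hj)]
      have e4 : (k' i : ℕ) = k i + 1 := by rw [hki]
      omega

/-- any safe configuration `k₂` that is non-regressive with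
respect to a safe configuration `k₁` is reachable from `k₁`. -/
theorem safe_to_safe_reachable
    {I N : Type*} [Fintype I] [DecidableEq I] [DecidableEq N]
    (c : N → ℕ) (L : I → ℕ) (p : ∀ i : I, Fin (L i + 1) → N)
    (k₁ k₂ : ∀ i : I, Fin (L i + 1))
    (h₁ : SafeConfig c L p k₁) (h₂ : SafeConfig c L p k₂)
    (hnr : ∀ i : I, (k₁ i : ℕ) ≤ (k₂ i : ℕ)) :
    Reachable c L p k₁ k₂ := by
  unfold Reachable
  by_cases hI : Nonempty I
  · obtain ⟨i⟩ := hI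
    exact reach_aux c L p k₂ h₂ _ k₁ (p i (k₁ i)) (fun n _ => h₁ n) (h₁ _).le hnr rfl
  · have : k₁ = k₂ := funext fun i => (hI ⟨i⟩).elim
    rw [this]
end

section
/- In the path-constrained railway transition system, suppose a safe configuration s is reachable from a configuration k₀. Then every safe configuration s' that is non-regressive with respect to s (i.e., s i ≤ s' i for every train i) is also reachable from k₀. (Feasibility of reaching some safe terminal assignment implies feasibility of reaching any longer, safe, non-regressive terminal assignment.) -/
/-- All nodes have a free slot when train `j` is not counted. -/
def GoodFor {I N : Type*} [Fintype I] [DecidableEq I] [DecidableEq N]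
    (c : N → ℕ) (L : I → ℕ) (p : ∀ i : I, Fin (L i + 1) → N)
    (j : I) (k : ∀ i : I, Fin (L i + 1)) : Prop :=
  ∀ n : N, (Finset.univ.filter (fun i : I => i ≠ j ∧ p i (k i) = n)).card < c n

theorem reach_update {I N : Type*} [Fintype I] [DecidableEq I] [DecidableEq N]
    (c : N → ℕ) (L : I → ℕ) (p : ∀ i : I, Fin (L i + 1) → N)
    (j : I) (k : ∀ i : I, Fin (L i + 1)) (hg : GoodFor c L p j k) (d : ℕ) :
    ∀ h : (k j : ℕ) + d < L j + 1,
      Reachable c L p k (Function.update k j ⟨(k j : ℕ) + d, h⟩) := by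
  induction d with
  | zero =>
    intro h
    have : Function.update k j ⟨(k j : ℕ) + 0, h⟩ = k := by
      simp
    rw [this]
    exact Relation.ReflTransGen.refl
  | succ d ih =>
    intro h
    refine Relation.ReflTransGen.tail (ih (by omega)) ?_
    refine ⟨j, by simp; omega, ?_, ?_, ?_⟩
    · simp; omega
    · intro i hi
      simp [hi]
    · refine lt_of_le_of_lt (Finset.card_le_card ?_) (hg _)
      intro i
      simp only [Finset.mem_filter, Finset.mem_univ, true_and]
      rintro ⟨hi, he⟩
      refine ⟨hi, ?_⟩
      rwa [Function.update_of_ne hi] at he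

theorem good_next {I N : Type*} [Fintype I] [DecidableEq I] [DecidableEq N]
    (c : N → ℕ) (L : I → ℕ) (p : ∀ i : I, Fin (L i + 1) → N)
    (j : I) (k s' : ∀ i : I, Fin (L i + 1)) (hs' : SafeConfig c L p s')
    (hj : k j = s' j)
    (hg : GoodFor c L p j k) (hne : k ≠ s') :
    ∃ j', k j' ≠ s' j' ∧ GoodFor c L p j' k := by
  by_cases hex : ∃ j', k j' ≠ s' j' ∧ p j' (k j') = p j (k j)
  · obtain ⟨j', hj', hp⟩ := hex
    refine ⟨j', hj', fun m => ?_⟩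
    have hjj : j ≠ j' := fun h => hj' (h ▸ hj)
    refine lt_of_le_of_lt ?_ (hg m)
    by_cases hm : m = p j (k j)
    · have h1 : (Finset.univ.filter (fun i : I => i ≠ j' ∧ p i (k i) = m))
          = (Finset.univ.filter (fun i : I => p i (k i) = m)).erase j' := by
        ext i; simp
      have h2 : (Finset.univ.filter (fun i : I => i ≠ j ∧ p i (k i) = m))
          = (Finset.univ.filter (fun i : I => p i (k i) = m)).erase j := by
        ext i; simp
      rw [h1, h2, Finset.card_erase_of_mem (by simp [hp, hm]),
        Finset.card_erase_of_mem (by simp [hm])]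
    · apply Finset.card_le_card
      intro i
      simp only [Finset.mem_filter, Finset.mem_univ, true_and]
      rintro ⟨_, he⟩
      refine ⟨?_, he⟩
      rintro rfl
      exact hm he.symm
  · push Not at hex
    obtain ⟨j', hj'⟩ := Function.ne_iff.mp hne
    refine ⟨j', hj', fun m => ?_⟩
    by_cases hm : m = p j (k j)
    · refine lt_of_le_of_lt (Finset.card_le_card ?_) (hs' m)
      intro i
      simp only [Finset.mem_filter, Finset.mem_univ, true_and]
      rintro ⟨_, he⟩
      by_cases hi : k i = s' i
      · rw [← hi]; exact he
      · exact absurd (he.trans hm) (hex i hi)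
    · refine lt_of_le_of_lt (Finset.card_le_card ?_) (hg m)
      intro i
      simp only [Finset.mem_filter, Finset.mem_univ, true_and]
      rintro ⟨_, he⟩
      refine ⟨?_, he⟩
      rintro rfl
      exact hm he.symm

theorem reach_of_good {I N : Type*} [Fintype I] [DecidableEq I] [DecidableEq N]
    (c : N → ℕ) (L : I → ℕ) (p : ∀ i : I, Fin (L i + 1) → N)
    (s' : ∀ i : I, Fin (L i + 1)) (hs' : SafeConfig c L p s') (b : ℕ) :
    ∀ (k : ∀ i : I, Fin (L i + 1)) (j : I),
      (Finset.univ.filter (fun i : I => k i ≠ s' i)).card ≤ b →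
      (∀ i : I, (k i : ℕ) ≤ (s' i : ℕ)) → k j ≠ s' j → GoodFor c L p j k →
      Reachable c L p k s' := by
  induction b with
  | zero =>
    intro k j hb _ hj _
    have : j ∈ (Finset.univ.filter (fun i : I => k i ≠ s' i)) := by simp [hj]
    have := Finset.card_pos.mpr ⟨j, this⟩
    omega
  | succ b ih =>
    intro k j hb hle hj hg
    have hr : Reachable c L p k (Function.update k j (s' j)) := by
      have := reach_update c L p j k hg ((s' j : ℕ) - k j)
        (by have := hle j; have := (s' j).isLt; omega)
      convert this using 3
      have := hle j
      omega
    by_cases hne : Function.update k j (s' j) = s'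
    · rwa [hne] at hr
    have hg' : GoodFor c L p j (Function.update k j (s' j)) := by
      intro n
      refine lt_of_le_of_lt (Finset.card_le_card ?_) (hg n)
      intro i
      simp only [Finset.mem_filter, Finset.mem_univ, true_and]
      rintro ⟨hi, he⟩
      rw [Function.update_of_ne hi] at he
      exact ⟨hi, he⟩
    obtain ⟨j', hj', hgj'⟩ := good_next c L p j _ s' hs' (by simp) hg' hne
    refine Relation.ReflTransGen.trans hr (ih _ j' ?_ ?_ hj' hgj')
    · have hlt : (Finset.univ.filter (fun i : I => Function.update k j (s' j) i ≠ s' i)).card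
          < (Finset.univ.filter (fun i : I => k i ≠ s' i)).card := by
        apply Finset.card_lt_card
        rw [Finset.ssubset_iff_of_subset]
        · exact ⟨j, by simp [hj], by simp⟩
        · intro i
          simp only [Finset.mem_filter, Finset.mem_univ, true_and]
          intro h
          by_cases hi : i = j
          · subst hi; simp at h
          · rwa [Function.update_of_ne hi] at h
      omega
    · intro i
      by_cases hi : i = j
      · subst hi; simp
      · rw [Function.update_of_ne hi]; exact hle i

/-- if a safe configuration `s` is reachable from `k₀`, then every
safe configuration `s'` that is non-regressive with respect to `s` is also
reachable from `k₀`. -/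
theorem reachable_safe_extension
    {I N : Type*} [Fintype I] [DecidableEq I] [DecidableEq N]
    (c : N → ℕ) (L : I → ℕ) (p : ∀ i : I, Fin (L i + 1) → N)
    (k₀ s s' : ∀ i : I, Fin (L i + 1))
    (hreach : Reachable c L p k₀ s)
    (hs : SafeConfig c L p s) (hs' : SafeConfig c L p s')
    (hnr : ∀ i : I, (s i : ℕ) ≤ (s' i : ℕ)) :
    Reachable c L p k₀ s' := by
  by_cases hne : s = s'
  · rwa [← hne]
  obtain ⟨j, hj⟩ := Function.ne_iff.mp hne
  refine Relation.ReflTransGen.trans hreach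
    (reach_of_good c L p s' hs' _ s j le_rfl hnr hj fun n => ?_)
  refine lt_of_le_of_lt (Finset.card_le_card ?_) (hs n)
  intro i
  simp only [Finset.mem_filter, Finset.mem_univ, true_and]
  exact fun h => h.2
end

section
/- In the path-constrained railway transition system, assume the terminal capacity condition: for every node n, the number of trains i whose path terminates at n (i.e., p_i (L_i) = n) is strictly less than c n. Then, for any configuration k₀, the terminal configuration (every train at the last index of its path) is reachable from k₀ if and only if some safe configuration is reachable from k₀. (Deadlock characterization: the system state is not deadlocked if and only if a schedule driving it to a safe state exists.) -/
/-- Any train `j` may run to its end when every node has a slot free of the other trains. -/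
lemma run_to_end {I N : Type*} [Fintype I] [DecidableEq I] [DecidableEq N]
    (c : N → ℕ) (L : I → ℕ) (p : ∀ i : I, Fin (L i + 1) → N) (j : I) :
    ∀ (d : ℕ) (k : ∀ i : I, Fin (L i + 1)), L j - (k j : ℕ) = d →
      (∀ n, (Finset.univ.filter (fun i : I => i ≠ j ∧ p i (k i) = n)).card < c n) →
      Reachable c L p k (Function.update k j (Fin.last (L j))) := by
  intro d
  induction d with
  | zero =>
    intro k hd _
    have : k j = Fin.last (L j) := by
      apply Fin.ext
      have := (k j).2
      simp only [Fin.val_last]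
      omega
    rw [← this, Function.update_eq_self]
    exact Relation.ReflTransGen.refl
  | succ d ih =>
    intro k hd hk
    have h : (k j : ℕ) < L j := by omega
    have hstep : Move c L p k (Function.update k j ⟨(k j : ℕ) + 1, Nat.succ_lt_succ h⟩) := by
      refine ⟨j, h, by simp, fun i hi => by simp [hi], hk _⟩
    refine Relation.ReflTransGen.head hstep ?_
    have := ih (Function.update k j ⟨(k j : ℕ) + 1, Nat.succ_lt_succ h⟩)
      (by simp only [Function.update_self]; omega) (by
        intro n
        refine lt_of_eq_of_lt ?_ (hk n)
        congr 1
        apply Finset.filter_congr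
        intro i _
        by_cases hi : i = j <;> simp [hi])
    rwa [Function.update_idem] at this

lemma excl_le {I N : Type*} [Fintype I] [DecidableEq I] [DecidableEq N]
    (f : I → N) (j : I) (n : N) :
    (Finset.univ.filter (fun i : I => i ≠ j ∧ f i = n)).card
      ≤ (Finset.univ.filter (fun i : I => f i = n)).card := by
  apply Finset.card_le_card
  intro i
  simp only [Finset.mem_filter]
  tauto

lemma excl_ne {I N : Type*} [Fintype I] [DecidableEq I] [DecidableEq N]
    (f : I → N) (j : I) (n : N) (h : f j ≠ n) :
    (Finset.univ.filter (fun i : I => i ≠ j ∧ f i = n)).card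
      = (Finset.univ.filter (fun i : I => f i = n)).card := by
  congr 1
  apply Finset.filter_congr
  intro i _
  constructor
  · exact fun h => h.2
  · exact fun hi => ⟨fun e => h (e ▸ hi), hi⟩

lemma excl_eq {I N : Type*} [Fintype I] [DecidableEq I] [DecidableEq N]
    (f : I → N) (j : I) (n : N) (h : f j = n) :
    (Finset.univ.filter (fun i : I => i ≠ j ∧ f i = n)).card + 1
      = (Finset.univ.filter (fun i : I => f i = n)).card := by
  rw [← Finset.card_erase_add_one (s := Finset.univ.filter (fun i : I => f i = n)) (a := j)
    (by simp [h])]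
  congr 2
  ext i
  simp

lemma term_reach {I N : Type*} [Fintype I] [DecidableEq I] [DecidableEq N]
    (c : N → ℕ) (L : I → ℕ) (p : ∀ i : I, Fin (L i + 1) → N)
    (hterm : ∀ n : N,
      (Finset.univ.filter (fun i : I => p i (Fin.last (L i)) = n)).card < c n) :
    ∀ (d : ℕ) (j : I) (k : ∀ i : I, Fin (L i + 1)),
      (Finset.univ.filter (fun i : I => k i ≠ Fin.last (L i))).card = d →
      k j ≠ Fin.last (L j) →
      (∀ n, (Finset.univ.filter (fun i : I => i ≠ j ∧ p i (k i) = n)).card < c n) →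
      Reachable c L p k (fun i => Fin.last (L i)) := by
  intro d
  induction d using Nat.strong_induction_on with
  | _ d ih =>
  intro j k hd hj hk
  have hreach := run_to_end c L p j _ k rfl hk
  obtain ⟨k', hk'⟩ : ∃ k', k' = Function.update k j (Fin.last (L j)) := ⟨_, rfl⟩
  rw [← hk'] at hreach
  have hkj : k' j = Fin.last (L j) := by simp [hk']
  have hki : ∀ i, i ≠ j → k' i = k i := fun i hi => by simp [hk', hi]
  have hinv : ∀ n, (Finset.univ.filter (fun i : I => i ≠ j ∧ p i (k' i) = n)).card < c n := by
    intro n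
    refine lt_of_eq_of_lt ?_ (hk n)
    congr 1
    apply Finset.filter_congr
    intro i _
    by_cases hi : i = j
    · simp [hi]
    · rw [hki i hi]
  have hlt : (Finset.univ.filter (fun i : I => k' i ≠ Fin.last (L i))).card < d := by
    rw [← hd]
    apply Finset.card_lt_card
    rw [Finset.ssubset_iff_of_subset]
    · exact ⟨j, by simp [hj], by simp [hkj]⟩
    · intro i
      simp only [Finset.mem_filter, Finset.mem_univ, true_and]
      intro h
      by_cases hi : i = j
      · subst hi; exact hj
      · rwa [hki i hi] at h
  refine Relation.ReflTransGen.trans hreach ?_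
  by_cases hs : ∀ n, (Finset.univ.filter (fun i : I => p i (k' i) = n)).card < c n
  · by_cases ht : ∀ i, k' i = Fin.last (L i)
    · rw [show k' = fun i => Fin.last (L i) from funext ht]
    · push Not at ht
      obtain ⟨i, hi⟩ := ht
      exact ih _ hlt i k' rfl hi
        (fun n => (excl_le (fun i => p i (k' i)) i n).trans_lt (hs n))
  · push Not at hs
    obtain ⟨m, hm⟩ := hs
    have hjm : p j (k' j) = m := by
      by_contra hne
      have := excl_ne (fun i => p i (k' i)) j m hne
      have := hinv m
      omega
    obtain ⟨i, him, hi⟩ : ∃ i, p i (k' i) = m ∧ k' i ≠ Fin.last (L i) := by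
      by_contra hcon
      push Not at hcon
      have hle : (Finset.univ.filter (fun i : I => p i (k' i) = m)).card ≤
          (Finset.univ.filter (fun i : I => p i (Fin.last (L i)) = m)).card := by
        apply Finset.card_le_card
        intro i
        simp only [Finset.mem_filter, Finset.mem_univ, true_and]
        intro h
        rw [← hcon i h]
        exact h
      have := hterm m
      omega
    refine ih _ hlt i k' rfl hi (fun n => ?_)
    by_cases hn : n = m
    · subst hn
      have h1 := excl_eq (fun i => p i (k' i)) i n him
      have h2 := excl_eq (fun i => p i (k' i)) j n hjm
      have := hinv n
      omega
    · have h1 := excl_ne (fun i => p i (k' i)) i n (fun h => hn (h.symm.trans him))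
      have h2 := excl_ne (fun i => p i (k' i)) j n (fun h => hn (h.symm.trans hjm))
      have := hinv n
      omega

/-- deadlock characterization: under the terminal capacity
condition, the terminal configuration is reachable from `k₀` if and only if
some safe configuration is reachable from `k₀`. -/
theorem terminal_reachable_iff_safe_reachable
    {I N : Type*} [Fintype I] [DecidableEq I] [DecidableEq N]
    (c : N → ℕ) (L : I → ℕ) (p : ∀ i : I, Fin (L i + 1) → N)
    (hterm : ∀ n : N,
      (Finset.univ.filter (fun i : I => p i (Fin.last (L i)) = n)).card < c n)
    (k₀ : ∀ i : I, Fin (L i + 1)) :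
    Reachable c L p k₀ (fun i => Fin.last (L i)) ↔
      ∃ s : ∀ i : I, Fin (L i + 1), SafeConfig c L p s ∧ Reachable c L p k₀ s := by
  constructor
  · exact fun h => ⟨_, hterm, h⟩
  · rintro ⟨s, hs, hr⟩
    refine Relation.ReflTransGen.trans hr ?_
    by_cases ht : ∀ i, s i = Fin.last (L i)
    · rw [show s = fun i => Fin.last (L i) from funext ht]
    · push Not at ht
      obtain ⟨i, hi⟩ := ht
      exact term_reach c L p hterm _ i s rfl hi
        (fun n => (excl_le (fun i => p i (s i)) i n).trans_lt (hs n))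
end

section
/- In the path-constrained railway transition system, assume the terminal capacity condition: for every node n, the number of trains i whose path terminates at n (i.e., p_i (L_i) = n) is strictly less than c n. Suppose a safe configuration s is reachable from a configuration k₀. Then for every configuration k' such that k' is reachable from k₀ and s is reachable from k', the terminal configuration is reachable from k'. (Recursive feasibility: operating the system along any schedule that ends in a safe state never drives the system into a deadlock; from every intermediate state, all trains can still reach their destinations.) -/
section helpers
variable {I N : Type*} [Fintype I] [DecidableEq I] [DecidableEq N]

/-- Removing train `j`, every node has a free slot. -/
def FreeBut (c : N → ℕ) (L : I → ℕ) (p : ∀ i : I, Fin (L i + 1) → N)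
    (k : ∀ i : I, Fin (L i + 1)) (j : I) : Prop :=
  ∀ n : N, (Finset.univ.filter (fun i : I => i ≠ j ∧ p i (k i) = n)).card < c n

theorem FreeBut.congr {c : N → ℕ} {L : I → ℕ} {p : ∀ i : I, Fin (L i + 1) → N}
    {k k' : ∀ i : I, Fin (L i + 1)} {j : I} (h : FreeBut c L p k j)
    (hk : ∀ i, i ≠ j → k' i = k i) : FreeBut c L p k' j := by
  intro n
  refine lt_of_le_of_lt (Finset.card_le_card ?_) (h n)
  intro i hi
  simp only [Finset.mem_filter, Finset.mem_univ, true_and] at hi ⊢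
  exact ⟨hi.1, by rw [← hk i hi.1]; exact hi.2⟩

theorem FreeBut.reach {c : N → ℕ} {L : I → ℕ} {p : ∀ i : I, Fin (L i + 1) → N} {j : I} :
    ∀ (d : ℕ) (k : ∀ i : I, Fin (L i + 1)), FreeBut c L p k j → L j - (k j : ℕ) = d →
      Reachable c L p k (Function.update k j (Fin.last (L j))) := by
  intro d
  induction d with
  | zero =>
    intro k _ hd
    have : k j = Fin.last (L j) := by
      ext
      have := (k j).isLt
      simp only [Fin.val_last]
      omega
    rw [← this, Function.update_eq_self]
    exact Relation.ReflTransGen.refl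
  | succ d ih =>
    intro k hk hd
    have hlt : (k j : ℕ) < L j := by omega
    have hmove : Move c L p k (Function.update k j ⟨(k j : ℕ) + 1, Nat.succ_lt_succ hlt⟩) := by
      refine ⟨j, hlt, by simp, fun i hi => by simp [hi], hk _⟩
    have h2 := ih (Function.update k j ⟨(k j : ℕ) + 1, Nat.succ_lt_succ hlt⟩)
      (hk.congr (fun i hi => by simp [hi])) (by simp; omega)
    rw [Function.update_idem] at h2
    exact Relation.ReflTransGen.head hmove h2

theorem FreeBut.next {c : N → ℕ} {L : I → ℕ} {p : ∀ i : I, Fin (L i + 1) → N}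
    (hterm : ∀ n : N,
      (Finset.univ.filter (fun i : I => p i (Fin.last (L i)) = n)).card < c n)
    {k : ∀ i : I, Fin (L i + 1)} {j : I} (h : FreeBut c L p k j)
    {m : I} (hm : k m ≠ Fin.last (L m)) :
    ∃ j', k j' ≠ Fin.last (L j') ∧ FreeBut c L p k j' := by
  have key : ∀ (j' : I) (n : N), n ≠ p j (k j) →
      (Finset.univ.filter (fun i : I => i ≠ j' ∧ p i (k i) = n)).card < c n := by
    intro j' n hn
    refine lt_of_le_of_lt (Finset.card_le_card ?_) (h n)
    intro i hi
    simp only [Finset.mem_filter, Finset.mem_univ, true_and] at hi ⊢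
    refine ⟨?_, hi.2⟩
    rintro rfl
    exact hn hi.2.symm
  by_cases hex : ∃ j', k j' ≠ Fin.last (L j') ∧ p j' (k j') = p j (k j)
  · obtain ⟨j', h1, h2⟩ := hex
    refine ⟨j', h1, fun n => ?_⟩
    by_cases hn : n = p j (k j)
    · subst hn
      have e : ∀ a : I, p a (k a) = p j (k j) →
          (Finset.univ.filter (fun i : I => i ≠ a ∧ p i (k i) = p j (k j))).card
          = (Finset.univ.filter (fun i : I => p i (k i) = p j (k j))).card - 1 := by
        intro a ha
        rw [← Finset.card_erase_of_mem (a := a) (by simp [ha])]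
        congr 1
        ext i
        simp
      have := h (p j (k j))
      rw [e j rfl] at this
      rw [e j' h2]
      exact this
    · exact key j' n hn
  · push Not at hex
    refine ⟨m, hm, fun n => ?_⟩
    by_cases hn : n = p j (k j)
    · subst hn
      refine lt_of_le_of_lt (Finset.card_le_card ?_) (hterm (p j (k j)))
      intro i hi
      simp only [Finset.mem_filter, Finset.mem_univ, true_and] at hi ⊢
      by_cases hl : k i = Fin.last (L i)
      · rw [← hl]; exact hi.2
      · exact absurd hi.2 (hex i hl)
    · exact key m n hn

theorem FreeBut.terminal {c : N → ℕ} {L : I → ℕ} {p : ∀ i : I, Fin (L i + 1) → N}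
    (hterm : ∀ n : N,
      (Finset.univ.filter (fun i : I => p i (Fin.last (L i)) = n)).card < c n) :
    ∀ (d : ℕ) (k : ∀ i : I, Fin (L i + 1)) (j : I), FreeBut c L p k j →
      (Finset.univ.filter (fun i : I => k i ≠ Fin.last (L i))).card = d →
      Reachable c L p k (fun i => Fin.last (L i)) := by
  intro d
  induction d using Nat.strong_induction_on with
  | _ d ih =>
    intro k j hj hd
    by_cases hall : ∀ i, k i = Fin.last (L i)
    · rw [show k = fun i => Fin.last (L i) from funext hall]
      exact Relation.ReflTransGen.refl
    · push Not at hall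
      obtain ⟨m, hm⟩ := hall
      obtain ⟨j', h1, h2⟩ := hj.next hterm hm
      refine Relation.ReflTransGen.trans (h2.reach _ k rfl) ?_
      refine ih _ ?_ _ j' (h2.congr (fun i hi => by simp [hi])) rfl
      rw [← hd]
      apply Finset.card_lt_card
      rw [Finset.ssubset_iff_of_subset]
      · exact ⟨j', by simp [h1], by simp⟩
      · intro i hi
        simp only [Finset.mem_filter, Finset.mem_univ, true_and] at hi ⊢
        by_cases hij : i = j'
        · subst hij; exact h1
        · simpa [hij] using hi

end helpers

/-- recursive feasibility: under the terminal capacity condition,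
if a safe configuration `s` is reachable from `k₀`, then from every intermediate
configuration `k'` (reachable from `k₀` and from which `s` is reachable) the
terminal configuration is reachable. -/
theorem recursive_feasibility
    {I N : Type*} [Fintype I] [DecidableEq I] [DecidableEq N]
    (c : N → ℕ) (L : I → ℕ) (p : ∀ i : I, Fin (L i + 1) → N)
    (hterm : ∀ n : N,
      (Finset.univ.filter (fun i : I => p i (Fin.last (L i)) = n)).card < c n)
    (k₀ s : ∀ i : I, Fin (L i + 1))
    (hs : SafeConfig c L p s) (hreach : Reachable c L p k₀ s) :
    ∀ k' : ∀ i : I, Fin (L i + 1),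
      Reachable c L p k₀ k' → Reachable c L p k' s →
        Reachable c L p k' (fun i => Fin.last (L i)) := by
  intro k' _ hk's
  refine Relation.ReflTransGen.trans hk's ?_
  by_cases hI : Nonempty I
  · obtain ⟨j⟩ := hI
    refine FreeBut.terminal hterm _ s j (fun n => ?_) rfl
    refine lt_of_le_of_lt (Finset.card_le_card ?_) (hs n)
    intro i hi
    simp only [Finset.mem_filter, Finset.mem_univ, true_and] at hi ⊢
    exact hi.2
  · rw [show s = fun i => Fin.last (L i) from funext fun i => absurd ⟨i⟩ hI]
end

section
/- In the path-constrained railway transition system, let k₁ and k₂ be configurations that are both safe with k₂ non-regressive with respect to k₁ (k₁ i ≤ k₂ i for every train i), and let i₀ be any train with k₁ i₀ < k₂ i₀. Then there exists a nonempty sequence of single moves driving the system from k₁ to k₂ whose first move advances train i₀. (Between safe states, the train that starts moving first can be chosen arbitrarily among those that must move.) -/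
/-- The configuration becomes safe once train `j` is removed. -/
def SafeWithout {I N : Type*} [Fintype I] [DecidableEq I] [DecidableEq N]
    (c : N → ℕ) (L : I → ℕ) (p : ∀ i : I, Fin (L i + 1) → N)
    (k : ∀ i : I, Fin (L i + 1)) (j : I) : Prop :=
  ∀ n : N, (Finset.univ.filter (fun i : I => i ≠ j ∧ p i (k i) = n)).card < c n

theorem SafeWithout.of_safe {I N : Type*} [Fintype I] [DecidableEq I] [DecidableEq N]
    {c : N → ℕ} {L : I → ℕ} {p : ∀ i : I, Fin (L i + 1) → N}
    {k : ∀ i : I, Fin (L i + 1)} (h : SafeConfig c L p k) (j : I) :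
    SafeWithout c L p k j := by
  intro n
  refine lt_of_le_of_lt (Finset.card_le_card ?_) (h n)
  intro i
  simp only [Finset.mem_filter, Finset.mem_univ, true_and]
  exact fun h => h.2

/-- Advancing the removed train is a legal move and preserves the invariant. -/
theorem SafeWithout.step {I N : Type*} [Fintype I] [DecidableEq I] [DecidableEq N]
    {c : N → ℕ} {L : I → ℕ} {p : ∀ i : I, Fin (L i + 1) → N}
    {k : ∀ i : I, Fin (L i + 1)} {j : I} (h : SafeWithout c L p k j)
    (hj : (k j : ℕ) < L j) :
    ∃ k' : ∀ i : I, Fin (L i + 1), Move c L p k k' ∧ ((k' j : ℕ) = (k j : ℕ) + 1) ∧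
      (∀ i : I, i ≠ j → k' i = k i) ∧ SafeWithout c L p k' j := by
  have hne : ∀ i : I, i ≠ j →
      Function.update k j ⟨(k j : ℕ) + 1, Nat.succ_lt_succ hj⟩ i = k i :=
    fun i hi => Function.update_of_ne hi _ _
  refine ⟨Function.update k j ⟨(k j : ℕ) + 1, Nat.succ_lt_succ hj⟩,
    ⟨j, hj, by simp, hne, h _⟩, by simp, hne, ?_⟩
  intro n
  refine lt_of_le_of_lt (Finset.card_le_card ?_) (h n)
  intro i
  simp only [Finset.mem_filter, Finset.mem_univ, true_and]
  rintro ⟨hi, h'⟩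
  rw [hne i hi] at h'
  exact ⟨hi, h'⟩

/-- As long as the target is not reached, the removed train can be chosen among
those that still have to move. -/
theorem SafeWithout.choose_mover {I N : Type*} [Fintype I] [DecidableEq I] [DecidableEq N]
    {c : N → ℕ} {L : I → ℕ} {p : ∀ i : I, Fin (L i + 1) → N}
    {k k₂ : ∀ i : I, Fin (L i + 1)} {j : I} (h : SafeWithout c L p k j)
    (h₂ : SafeConfig c L p k₂) (hle : ∀ i : I, (k i : ℕ) ≤ (k₂ i : ℕ)) (hne : k ≠ k₂) :
    ∃ j' : I, (k j' : ℕ) < (k₂ j' : ℕ) ∧ SafeWithout c L p k j' := by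
  by_cases hs : SafeConfig c L p k
  · obtain ⟨i, hi⟩ := Function.ne_iff.mp hne
    exact ⟨i, lt_of_le_of_ne (hle i) (fun e => hi (Fin.ext e)), .of_safe hs i⟩
  · -- the only full node is the one holding train `j`
    have erase : ∀ (a : I) (n : N),
        Finset.univ.filter (fun i : I => i ≠ a ∧ p i (k i) = n)
          = (Finset.univ.filter (fun i : I => p i (k i) = n)).erase a := by
      intro a n; ext i; simp
    unfold SafeConfig at hs
    push Not at hs
    obtain ⟨m, hm⟩ := hs
    have key : ∃ j' : I, p j' (k j') = m ∧ (k j' : ℕ) < (k₂ j' : ℕ) := by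
      by_contra! hcon
      refine absurd (h₂ m) (not_lt.mpr (hm.trans (Finset.card_le_card ?_)))
      intro i
      simp only [Finset.mem_filter, Finset.mem_univ, true_and]
      intro hi
      have : k i = k₂ i := Fin.ext (le_antisymm (hle i) (hcon i hi))
      rw [← this]; exact hi
    obtain ⟨j', hj'm, hj'⟩ := key
    have hjm : p j (k j) = m := by
      by_contra hc
      have := h m
      rw [erase, Finset.erase_eq_of_notMem (by simpa using hc)] at this
      omega
    refine ⟨j', hj', fun n => ?_⟩
    have hn := h n
    rw [erase] at hn ⊢
    by_cases hnm : n = m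
    · subst hnm
      rw [Finset.card_erase_of_mem (by simpa using hjm)] at hn
      rwa [Finset.card_erase_of_mem (by simpa using hj'm)]
    · rw [Finset.erase_eq_of_notMem (by simp [hjm, Ne.symm hnm])] at hn
      exact lt_of_le_of_lt (Finset.card_le_card (Finset.erase_subset _ _)) hn

theorem SafeWithout.reachable {I N : Type*} [Fintype I] [DecidableEq I] [DecidableEq N]
    {c : N → ℕ} {L : I → ℕ} {p : ∀ i : I, Fin (L i + 1) → N}
    {k₂ : ∀ i : I, Fin (L i + 1)} (h₂ : SafeConfig c L p k₂) (d : ℕ) :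
    ∀ (k : ∀ i : I, Fin (L i + 1)) (j : I), SafeWithout c L p k j →
      (∀ i : I, (k i : ℕ) ≤ (k₂ i : ℕ)) → ∑ i, ((k₂ i : ℕ) - (k i : ℕ)) = d →
      Reachable c L p k k₂ := by
  induction d using Nat.strong_induction_on with
  | _ d ih =>
    intro k j h hle hd
    by_cases hne : k = k₂
    · rw [hne]; exact Relation.ReflTransGen.refl
    · obtain ⟨a, ha, hsa⟩ := h.choose_mover h₂ hle hne
      obtain ⟨k', hmove, hk'a, hk', hs'⟩ := hsa.step (by have := (k₂ a).isLt; omega)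
      refine Relation.ReflTransGen.head hmove (ih _ ?_ k' a hs' ?_ rfl)
      · rw [← hd]
        refine Finset.sum_lt_sum (fun i _ => ?_) ⟨a, Finset.mem_univ a, by omega⟩
        by_cases hi : i = a
        · subst hi; omega
        · rw [hk' i hi]
      · intro i
        by_cases hi : i = a
        · subst hi; omega
        · rw [hk' i hi]; exact hle i

/-- between safe states, the first train to move can be chosen
arbitrarily among the trains that must move: there is a nonempty sequence of
single moves from `k₁` to `k₂` whose first move advances train `i₀`. -/
theorem first_mover_arbitrary
    {I N : Type*} [Fintype I] [DecidableEq I] [DecidableEq N]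
    (c : N → ℕ) (L : I → ℕ) (p : ∀ i : I, Fin (L i + 1) → N)
    (k₁ k₂ : ∀ i : I, Fin (L i + 1))
    (h₁ : SafeConfig c L p k₁) (h₂ : SafeConfig c L p k₂)
    (hnr : ∀ i : I, (k₁ i : ℕ) ≤ (k₂ i : ℕ))
    (i₀ : I) (hi₀ : (k₁ i₀ : ℕ) < (k₂ i₀ : ℕ)) :
    ∃ k' : ∀ i : I, Fin (L i + 1),
      Move c L p k₁ k' ∧
      ((k' i₀ : ℕ) = (k₁ i₀ : ℕ) + 1) ∧
      (∀ j : I, j ≠ i₀ → k' j = k₁ j) ∧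
      Reachable c L p k' k₂ := by
  obtain ⟨k', hmove, hk, hk', hs⟩ := (SafeWithout.of_safe h₁ i₀).step
    (by have := (k₂ i₀).isLt; omega)
  refine ⟨k', hmove, hk, hk', SafeWithout.reachable h₂ _ k' i₀ hs ?_ rfl⟩
  intro i
  by_cases hi : i = i₀
  · subst hi; omega
  · rw [hk' i hi]; exact hnr i
end
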